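/- In every C_k-algebra (A, t) the following hold for all a, b, c ∈ A: (i) a ⇁ a = 1; (ii) a ⇁ △a = 1; (iii) a ⇁ t^s(a) = 1 for every natural number s; (iv) a ⇁ (a ∧ b) = a ⇁ b; (v) if a ≤ b then c ⇁ a ≤ c ⇁ b; (vii) a ⇁ (b ⇁ a) = 1; (viii) if 1 ⇁ a = 1 then a = 1; (x) a ⇁ 1 = 1. -/

import Mathlib

universe u

/-- Modal pseudocomplemented De Morgan algebra (mpM-algebra). -/
class MpM (A : Type u) extends DistribLattice A, BoundedOrder A where
  dm : A → A   -- De Morgan negation ∼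
  ps : A → A   -- pseudocomplement *
  dm_dm : ∀ x : A, dm (dm x) = x
  dm_sup : ∀ x y : A, dm (x ⊔ y) = dm x ⊓ dm y
  pseudo : ∀ a x : A, a ⊓ x = ⊥ ↔ x ≤ ps a
  modal : ∀ x : A, x ⊔ dm x ≤ x ⊔ ps x

open MpM

variable {A : Type u} [MpM A]

/-- ∇x = ∼(∼x ∧ x*) -/
def nabla (x : A) : A := dm (dm x ⊓ ps x)

/-- △x = ∼∇∼x -/
def tri (x : A) : A := dm (nabla (dm x))

/-- A C_k-algebra structure on an mpM-algebra `A`: an automorphism `t` with `t^k = id`. -/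
structure CkStr (A : Type u) [MpM A] (k : ℕ) where
  t : A → A
  bij : Function.Bijective t
  map_inf : ∀ x y : A, t (x ⊓ y) = t x ⊓ t y
  map_sup : ∀ x y : A, t (x ⊔ y) = t x ⊔ t y
  map_dm : ∀ x : A, t (dm x) = dm (t x)
  map_ps : ∀ x : A, t (ps x) = ps (t x)
  map_bot : t (⊥ : A) = ⊥
  map_top : t (⊤ : A) = ⊤
  periodic : ∀ x : A, t^[k] x = x

/-- Lattice filter: nonempty, upward closed, closed under binary meets. -/
def IsLatFilter (F : Set A) : Prop :=
  F.Nonempty ∧ (∀ x ∈ F, ∀ y : A, x ≤ y → y ∈ F) ∧ ∀ x ∈ F, ∀ y ∈ F, x ⊓ y ∈ F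

/-- c-filter: a filter closed under △ and t. -/
def IsCFilter {k : ℕ} (T : CkStr A k) (F : Set A) : Prop :=
  IsLatFilter F ∧ ∀ x ∈ F, tri x ∈ F ∧ T.t x ∈ F

/-- maximal c-filter: proper and not properly contained in a proper c-filter. -/
def IsMaxCFilter {k : ℕ} (T : CkStr A k) (N : Set A) : Prop :=
  IsCFilter T N ∧ N ≠ Set.univ ∧
    ∀ G : Set A, IsCFilter T G → G ≠ Set.univ → N ⊆ G → N = G

/-- prime filter -/
def IsPrimeFilter (P : Set A) : Prop :=
  IsLatFilter P ∧ P ≠ Set.univ ∧ ∀ x y : A, x ⊔ y ∈ P → x ∈ P ∨ y ∈ P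

/-- ultrafilter: maximal proper (lattice) filter -/
def IsUltraFilter (U : Set A) : Prop :=
  IsLatFilter U ∧ U ≠ Set.univ ∧
    ∀ G : Set A, IsLatFilter G → G ≠ Set.univ → U ⊆ G → U = G

/-- Birula–Rasiowa transformation φ(P) = A \ {∼x : x ∈ P}. -/
def brPhi (P : Set A) : Set A := Set.univ \ (dm '' P)

/-- a ⇁ b = (⋁_{i=1}^{k} ∇(∼ t^i(a))) ∨ b -/
def rimp {k : ℕ} (T : CkStr A k) (a b : A) : A :=
  ((Finset.Icc 1 k).sup fun i => nabla (dm (T.t^[i] a))) ⊔ b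

/-- cyclic deductive system -/
def IsCDS {k : ℕ} (T : CkStr A k) (D : Set A) : Prop :=
  (⊤ : A) ∈ D ∧ ∀ x ∈ D, ∀ y : A, rimp T x y ∈ D → y ∈ D

/-- maximal cyclic deductive system -/
def IsMaxCDS {k : ℕ} (T : CkStr A k) (M : Set A) : Prop :=
  IsCDS T M ∧ M ≠ Set.univ ∧
    ∀ G : Set A, IsCDS T G → G ≠ Set.univ → M ⊆ G → M = G

/-- the smallest cyclic deductive system containing `X` -/
def genCDS {k : ℕ} (T : CkStr A k) (X : Set A) : Set A :=
  ⋂₀ {D : Set A | IsCDS T D ∧ X ⊆ D}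

/-- K(A) = {x : t(x) = x and ∇x = x} -/
def Kset {k : ℕ} (T : CkStr A k) : Set A := {x : A | T.t x = x ∧ nabla x = x}

/-- consistency operator ∘x = ⋀_{i=0}^{k} t^i((∼x ∨ x) ∧ (x ∧ ∼x)*) -/
def cCirc {k : ℕ} (T : CkStr A k) (x : A) : A :=
  (Finset.Icc 0 k).inf fun i => T.t^[i] ((dm x ⊔ x) ⊓ ps (x ⊓ dm x))

/-- x → y = ∼((∼(x∨y))* ∧ (x∨y)) ∨ ((∼(x∧y))* ∧ (x∧y)) -/
def mpTo (x y : A) : A :=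
  dm (ps (dm (x ⊔ y)) ⊓ (x ⊔ y)) ⊔ (ps (dm (x ⊓ y)) ⊓ (x ⊓ y))

/-- x ⇒ y = (x → y) ∧ (∼y → ∼x) -/
def mpIff (x y : A) : A := mpTo x y ⊓ mpTo (dm y) (dm x)

/-
In a De Morgan algebra `∼` exchanges disjoint and codisjoint pairs, so `x ∧ x* = 0` dualizes to
`∇∼x ∨ x = 1`, and the modal axiom makes `∇x` complemented with complement `∼∇x`. Hence both `x`
and `△x = ∼∇∼x` join with `∇∼x` to `1`. Since `a` has period `k` under `t`, every `∇∼tˢ(a)` is one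
of the joinands of `a ⇁ b`, so `a ⇁ b = 1` as soon as `b` joins with some `∇∼tˢ(a)` to `1`.
The remaining laws hold because `a ⇁ ·` is the join with a fixed element, which is `0` for `a = 1`.
-/

namespace MpM

theorem dm_antitone : Antitone (dm : A → A) := fun x y h => by
  rw [← sup_eq_right.2 h, dm_sup]
  exact inf_le_left

theorem dm_bot : dm (⊥ : A) = ⊤ :=
  top_le_iff.1 <| (dm_dm (⊤ : A)).ge.trans (dm_antitone bot_le)

theorem dm_top : dm (⊤ : A) = ⊥ := by
  rw [← dm_bot, dm_dm]

theorem dm_inf (x y : A) : dm (x ⊓ y) = dm x ⊔ dm y := by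
  rw [← dm_dm (dm x ⊔ dm y), dm_sup, dm_dm, dm_dm]

theorem codisjoint_dm {x y : A} (h : Disjoint x y) : Codisjoint (dm x) (dm y) :=
  codisjoint_iff.2 <| by rw [← dm_inf, h.eq_bot, dm_bot]

theorem disjoint_ps (x : A) : Disjoint x (ps x) :=
  disjoint_iff.2 ((pseudo x (ps x)).2 le_rfl)

theorem codisjoint_nabla_dm (x : A) : Codisjoint (nabla x) (dm x) :=
  codisjoint_dm ((disjoint_ps x).symm.mono_left inf_le_right)

theorem dm_inf_dm_ps_le (x : A) : dm x ⊓ dm (ps x) ≤ x :=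
  calc dm x ⊓ dm (ps x) = dm (x ⊔ ps x) := (dm_sup _ _).symm
    _ ≤ dm (x ⊔ dm x) := dm_antitone (modal x)
    _ = dm x ⊓ x := by rw [dm_sup, dm_dm]
    _ ≤ x := inf_le_right

theorem disjoint_dm_inf_ps_nabla (x : A) : Disjoint (dm x ⊓ ps x) (nabla x) := by
  have h_left : Disjoint (dm x ⊓ ps x) x := (disjoint_ps x).symm.mono_left inf_le_right
  have h_right : Disjoint (dm x ⊓ ps x) (dm (ps x)) := by
    rw [inf_comm, disjoint_assoc]
    exact (disjoint_ps x).symm.mono_right (dm_inf_dm_ps_le x)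
  rw [nabla, dm_inf, dm_dm]
  exact h_left.sup_right h_right

theorem codisjoint_nabla_dm_nabla (x : A) : Codisjoint (nabla x) (dm (nabla x)) :=
  codisjoint_dm (disjoint_dm_inf_ps_nabla x)

theorem codisjoint_nabla_dm_self (x : A) : Codisjoint (nabla (dm x)) x := by
  simpa only [dm_dm] using codisjoint_nabla_dm (dm x)

theorem codisjoint_nabla_dm_tri (x : A) : Codisjoint (nabla (dm x)) (tri x) :=
  codisjoint_nabla_dm_nabla (dm x)

theorem ps_bot : ps (⊥ : A) = ⊤ :=
  top_le_iff.1 ((pseudo _ _).1 (bot_inf_eq _))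

theorem nabla_bot : nabla (⊥ : A) = ⊥ := by
  rw [nabla, dm_bot, ps_bot, inf_idem, dm_top]

end MpM

theorem exists_mem_Icc_iterate_eq {α : Type*} {f : α → α} {k : ℕ} {x : α} (hk : 0 < k)
    (hx : Function.IsPeriodicPt f k x) (s : ℕ) : ∃ i ∈ Finset.Icc 1 k, f^[i] x = f^[s] x := by
  rcases (s % k).eq_zero_or_pos with h_zero | h_pos
  · refine ⟨k, Finset.mem_Icc.2 ⟨hk, le_rfl⟩, ?_⟩
    rw [← hx.iterate_mod_apply s, h_zero]
    exact hx
  · exact ⟨s % k, Finset.mem_Icc.2 ⟨h_pos, (s.mod_lt hk).le⟩, hx.iterate_mod_apply s⟩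

/-- The implication `a ⇁ b` for an arbitrary self-map `f` in place of the automorphism of a
`C_k`-algebra; `rimp T` is by definition `cyclicImp T.t k`. -/
def cyclicImp (f : A → A) (k : ℕ) (a b : A) : A :=
  ((Finset.Icc 1 k).sup fun i => nabla (dm (f^[i] a))) ⊔ b

section cyclicImp

variable {f : A → A} {k : ℕ} {a b : A}

theorem cyclicImp_eq_top_of_codisjoint (hk : 0 < k) (ha : Function.IsPeriodicPt f k a) (s : ℕ)
    (h : Codisjoint (nabla (dm (f^[s] a))) b) : cyclicImp f k a b = ⊤ := by
  obtain ⟨i, hi, h_eq⟩ := exists_mem_Icc_iterate_eq hk ha s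
  rw [← h_eq] at h
  exact (h.mono_left (Finset.le_sup (f := fun i => nabla (dm (f^[i] a))) hi)).eq_top

theorem cyclicImp_iterate (hk : 0 < k) (ha : Function.IsPeriodicPt f k a) (s : ℕ) :
    cyclicImp f k a (f^[s] a) = ⊤ :=
  cyclicImp_eq_top_of_codisjoint hk ha s (codisjoint_nabla_dm_self _)

theorem cyclicImp_self (hk : 0 < k) (ha : Function.IsPeriodicPt f k a) :
    cyclicImp f k a a = ⊤ :=
  cyclicImp_iterate hk ha 0

theorem cyclicImp_tri (hk : 0 < k) (ha : Function.IsPeriodicPt f k a) :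
    cyclicImp f k a (tri a) = ⊤ :=
  cyclicImp_eq_top_of_codisjoint hk ha 0 (codisjoint_nabla_dm_tri a)

theorem cyclicImp_mono_right (f : A → A) (k : ℕ) (a : A) : Monotone (cyclicImp f k a) :=
  fun _ _ h => sup_le_sup_left h _

theorem cyclicImp_inf (f : A → A) (k : ℕ) (a b c : A) :
    cyclicImp f k a (b ⊓ c) = cyclicImp f k a b ⊓ cyclicImp f k a c :=
  sup_inf_left _ _ _

theorem cyclicImp_self_inf (hk : 0 < k) (ha : Function.IsPeriodicPt f k a) (b : A) :
    cyclicImp f k a (a ⊓ b) = cyclicImp f k a b := by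
  rw [cyclicImp_inf, cyclicImp_self hk ha, top_inf_eq]

theorem cyclicImp_cyclicImp_self (hk : 0 < k) (ha : Function.IsPeriodicPt f k a) (b : A) :
    cyclicImp f k a (cyclicImp f k b a) = ⊤ :=
  top_le_iff.1 <| (cyclicImp_self hk ha).ge.trans (cyclicImp_mono_right f k a le_sup_right)

theorem top_cyclicImp (hf : f ⊤ = ⊤) (k : ℕ) (a : A) : cyclicImp f k ⊤ a = a := by
  have h_nabla (i : ℕ) : nabla (dm (f^[i] ⊤)) = ⊥ := by
    rw [Function.iterate_fixed hf, dm_top, nabla_bot]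
  simp only [cyclicImp, h_nabla, Finset.sup_bot, bot_sup_eq]

theorem cyclicImp_top (f : A → A) (k : ℕ) (a : A) : cyclicImp f k a ⊤ = ⊤ :=
  sup_top_eq _

end cyclicImp

theorem stmt5_general {f : A → A} {k : ℕ} (hk : 0 < k) (hf : f ⊤ = ⊤) {a : A}
    (ha : Function.IsPeriodicPt f k a) (b c : A) :
    cyclicImp f k a a = ⊤ ∧
    cyclicImp f k a (tri a) = ⊤ ∧
    (∀ s : ℕ, cyclicImp f k a (f^[s] a) = ⊤) ∧
    cyclicImp f k a (a ⊓ b) = cyclicImp f k a b ∧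
    (a ≤ b → cyclicImp f k c a ≤ cyclicImp f k c b) ∧
    cyclicImp f k a (cyclicImp f k b a) = ⊤ ∧
    (cyclicImp f k ⊤ a = ⊤ → a = ⊤) ∧
    cyclicImp f k a ⊤ = ⊤ :=
  ⟨cyclicImp_self hk ha,
    cyclicImp_tri hk ha,
    cyclicImp_iterate hk ha,
    cyclicImp_self_inf hk ha b,
    fun h => cyclicImp_mono_right f k c h,
    cyclicImp_cyclicImp_self hk ha b,
    (top_cyclicImp hf k a).symm.trans,
    cyclicImp_top f k a⟩

theorem stmt5 {k : ℕ} (hk : 0 < k) (T : CkStr A k) (a b c : A) :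
    rimp T a a = ⊤ ∧
    rimp T a (tri a) = ⊤ ∧
    (∀ s : ℕ, rimp T a (T.t^[s] a) = ⊤) ∧
    rimp T a (a ⊓ b) = rimp T a b ∧
    (a ≤ b → rimp T c a ≤ rimp T c b) ∧
    rimp T a (rimp T b a) = ⊤ ∧
    (rimp T ⊤ a = ⊤ → a = ⊤) ∧
    rimp T a ⊤ = ⊤ :=
  stmt5_general hk T.map_top (T.periodic a) b c
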